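/- Let R be a commutative ring. The following are equivalent: (1) every matrix in M_2(R) is a sum of three idempotent matrices; (2) for every n ≥ 1, every matrix in M_n(R) is a sum of three idempotent matrices; (3) R satisfies the identity x^3 = x (equivalently, R is isomorphic to A × B where A is Boolean and B is zero or a subdirect product of copies of Z_3). -/

import Mathlib

/-!
(1) ⇒ (3): localizing, assume that `R` has no idempotents besides `0` and `1`. By Cayley–Hamilton a
`2 × 2` idempotent is then `0`, `1`, or has trace `1` and determinant `0`, so a sum of three
idempotents has an integer trace between `0` and `6`, with strong restrictions at both ends. A
matrix of trace and determinant `1` forces `6 = 0`, and `diag(x, 0)` forces `x` to be an integer, so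
that `x ^ 3 = x` because `n ^ 3 - n` is divisible by `6`.

(3) ⇒ (2): the entries generate a Noetherian reduced ring of dimension `0`, i.e. a finite product of
fields, and over a field an endomorphism is a direct sum of cyclic ones. Let `f` be cyclic on a
module of rank `m + 1`. Replacing the vectors `f ^ i v` by Newton-type combinations, the first `m`
columns of `f` become lower bidiagonal, with ones below the diagonal and any prescribed diagonal.
Think of the basis as the path `0 — 1 — ⋯ — m`. The edges are distributed alternately to two
idempotents `e` and `e'`, each edge contributing `1` to the trace; this leaves one vertex at each
end of the path free to carry scalar idempotents `t` and `s`. For the right diagonal, `f - e - e'`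
vanishes on all but the last basis vector, so it is idempotent as soon as its trace is `1`, which
means `trace f = m + 1 + s + t`. Under (3) every scalar `c` is of the form `s + t`, namely
`c = c ^ 2 + (c - c ^ 2)`.
-/

open Polynomial

/-- `a` is a sum of three idempotents. Only addition and multiplication are assumed, so that the
notion applies alike to matrices, endomorphisms and products of rings. -/
def IsSumOfThreeIdempotents {S : Type*} [Mul S] [Add S] (a : S) : Prop :=
  ∃ e₁ e₂ e₃ : S,
    IsIdempotentElem e₁ ∧ IsIdempotentElem e₂ ∧ IsIdempotentElem e₃ ∧ a = e₁ + e₂ + e₃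

namespace IsSumOfThreeIdempotents

theorem map {F S T : Type*} [NonUnitalNonAssocSemiring S] [NonUnitalNonAssocSemiring T]
    [FunLike F S T] [NonUnitalRingHomClass F S T] {a : S} (h : IsSumOfThreeIdempotents a)
    (φ : F) : IsSumOfThreeIdempotents (φ a) := by
  obtain ⟨e, f, g, he, hf, hg, rfl⟩ := h
  exact ⟨φ e, φ f, φ g, he.map φ, hf.map φ, hg.map φ, by simp only [map_add]⟩

theorem pi {ι : Type*} {S : ι → Type*} [∀ i, Mul (S i)] [∀ i, Add (S i)] {a : ∀ i, S i}
    (h : ∀ i, IsSumOfThreeIdempotents (a i)) : IsSumOfThreeIdempotents a := by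
  choose e f g he hf hg ha using h
  exact ⟨e, f, g, funext he, funext hf, funext hg, funext ha⟩

theorem directSum_lmap {R ι : Type*} {M : ι → Type*} [Semiring R] [∀ i, AddCommMonoid (M i)]
    [∀ i, Module R (M i)] {f : ∀ i, Module.End R (M i)}
    (h : ∀ i, IsSumOfThreeIdempotents (f i)) :
    IsSumOfThreeIdempotents (S := Module.End R (DirectSum ι M)) (DirectSum.lmap f) := by
  have lmap_idem {e : ∀ i, Module.End R (M i)} (he : ∀ i, IsIdempotentElem (e i)) :
      IsIdempotentElem (M := Module.End R (DirectSum ι M)) (DirectSum.lmap e) :=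
    (DirectSum.lmap_comp e e).symm.trans <| congrArg DirectSum.lmap <| funext he
  choose e₁ e₂ e₃ he₁ he₂ he₃ hf using h
  refine ⟨DirectSum.lmap e₁, DirectSum.lmap e₂, DirectSum.lmap e₃,
    lmap_idem he₁, lmap_idem he₂, lmap_idem he₃, ?_⟩
  refine LinearMap.ext fun x => DFinsupp.ext fun i => ?_
  exact LinearMap.congr_fun (hf i) (x i)

end IsSumOfThreeIdempotents

section FinTwo

variable {S : Type*} [CommRing S]

theorem matrix_mul_self_fin_two (A : Matrix (Fin 2) (Fin 2) S) :
    A * A = A.trace • A - A.det • 1 := by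
  ext i j
  fin_cases i <;> fin_cases j <;>
    simp [Matrix.mul_apply, Matrix.trace_fin_two, Matrix.det_fin_two] <;> ring

theorem eq_zero_or_eq_one_or_trace_eq_one (hS : ∀ e : S, IsIdempotentElem e → e = 0 ∨ e = 1)
    {E : Matrix (Fin 2) (Fin 2) S} (hE : IsIdempotentElem E) :
    E = 0 ∨ E = 1 ∨ E.trace = 1 ∧ E.det = 0 := by
  have hdet_idem : IsIdempotentElem E.det := (Matrix.det_mul E E).symm.trans (congrArg _ hE)
  rcases hS E.det hdet_idem with hdet | hdet
  · have htrE : E = E.trace • E := by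
      simpa [hdet, hE.eq] using matrix_mul_self_fin_two E
    have htr : IsIdempotentElem E.trace := by
      simpa [IsIdempotentElem] using congrArg Matrix.trace htrE.symm
    rcases hS E.trace htr with htr | htr
    · exact .inl (by rw [htrE, htr, zero_smul])
    · exact .inr (.inr ⟨htr, hdet⟩)
  · have hunit : IsUnit E := (Matrix.isUnit_iff_isUnit_det E).2 (hdet ▸ isUnit_one)
    exact .inr (.inl ((IsIdempotentElem.iff_eq_one_of_isUnit hunit).1 hE))

/-- A combinatorial substitute for "`A` has rank `r`" on sums of idempotent `2 × 2` matrices: it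
records the trace, and what small rank says about the matrix. It is additive, whereas actual rank
is not. -/
def HasFormalRank (A : Matrix (Fin 2) (Fin 2) S) (r : ℕ) : Prop :=
  A.trace = r ∧ (r = 0 → A = 0) ∧ (r = 1 → A.det = 0)

theorem HasFormalRank.add {A B : Matrix (Fin 2) (Fin 2) S} {q r : ℕ} (hA : HasFormalRank A q)
    (hB : HasFormalRank B r) : HasFormalRank (A + B) (q + r) := by
  obtain ⟨trA, zeroA, detA⟩ := hA
  obtain ⟨trB, zeroB, detB⟩ := hB
  refine ⟨by rw [Matrix.trace_add, trA, trB, Nat.cast_add], fun h => ?_, fun h => ?_⟩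
  · rw [zeroA (by lia), zeroB (by lia), add_zero]
  · rcases Nat.add_eq_one_iff.1 h with ⟨hq, hr⟩ | ⟨hq, hr⟩
    · rw [zeroA hq, zero_add, detB hr]
    · rw [zeroB hr, add_zero, detA hq]

theorem exists_hasFormalRank_of_isIdempotentElem
    (hS : ∀ e : S, IsIdempotentElem e → e = 0 ∨ e = 1) {E : Matrix (Fin 2) (Fin 2) S}
    (hE : IsIdempotentElem E) :
    ∃ r s : ℕ, r + s = 2 ∧ HasFormalRank E r ∧ HasFormalRank (1 - E) s := by
  rcases eq_zero_or_eq_one_or_trace_eq_one hS hE with rfl | rfl | ⟨htr, hdet⟩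
  · exact ⟨0, 2, rfl, by simp [HasFormalRank], by simp [HasFormalRank]⟩
  · exact ⟨2, 0, rfl, by simp [HasFormalRank], by simp [HasFormalRank]⟩
  · refine ⟨1, 1, rfl, by simp [HasFormalRank, htr, hdet], ?_⟩
    have trace_compl : (1 - E).trace = 1 := by
      rw [Matrix.trace_sub, htr, Matrix.trace_one, Fintype.card_fin]
      norm_num
    have det_compl : (1 - E).det = 0 := by
      rw [Matrix.trace_fin_two] at htr
      rw [Matrix.det_fin_two] at hdet
      suffices (1 - E 0 0) * (1 - E 1 1) - E 0 1 * E 1 0 = 0 by simpa [Matrix.det_fin_two]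
      linear_combination hdet - htr
    simp [HasFormalRank, trace_compl, det_compl]

theorem IsSumOfThreeIdempotents.exists_hasFormalRank
    (hS : ∀ e : S, IsIdempotentElem e → e = 0 ∨ e = 1) {A : Matrix (Fin 2) (Fin 2) S}
    (hA : IsSumOfThreeIdempotents A) :
    ∃ r s : ℕ, r + s = 6 ∧ HasFormalRank A r ∧ HasFormalRank (3 - A) s := by
  obtain ⟨E₁, E₂, E₃, hE₁, hE₂, hE₃, rfl⟩ := hA
  obtain ⟨r₁, s₁, h₁, hr₁, hs₁⟩ := exists_hasFormalRank_of_isIdempotentElem hS hE₁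
  obtain ⟨r₂, s₂, h₂, hr₂, hs₂⟩ := exists_hasFormalRank_of_isIdempotentElem hS hE₂
  obtain ⟨r₃, s₃, h₃, hr₃, hs₃⟩ := exists_hasFormalRank_of_isIdempotentElem hS hE₃
  have compl : 3 - (E₁ + E₂ + E₃) = 1 - E₁ + (1 - E₂) + (1 - E₃) := by
    have three_eq : (3 : Matrix (Fin 2) (Fin 2) S) = 1 + 1 + 1 := by norm_num
    rw [three_eq]
    abel
  exact ⟨r₁ + r₂ + r₃, s₁ + s₂ + s₃, by lia, (hr₁.add hr₂).add hr₃,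
    compl ▸ (hs₁.add hs₂).add hs₃⟩

theorem six_eq_zero_of_isSumOfThreeIdempotents
    (hS : ∀ e : S, IsIdempotentElem e → e = 0 ∨ e = 1)
    (hC : IsSumOfThreeIdempotents (!![0, -1; 1, 1] : Matrix (Fin 2) (Fin 2) S)) :
    (6 : S) = 0 := by
  obtain ⟨r, s, hrs, ⟨htr, hzero, hdet⟩, -, hzero', hdet'⟩ := hC.exists_hasFormalRank hS
  have trace_eq : (1 : S) = r := by simpa [Matrix.trace_fin_two] using htr
  have of_r_eq_zero : r = 0 → (1 : S) = 0 := fun h => congrFun₂ (hzero h) 1 0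
  have of_r_eq_one : r = 1 → (1 : S) = 0 := fun h => by simpa [Matrix.det_fin_two] using hdet h
  have of_s_eq_zero : s = 0 → (1 : S) = 0 := fun h => by
    simpa [Matrix.ofNat_apply] using congrFun₂ (hzero' h) 1 0
  have of_s_eq_one : s = 1 → (7 : S) = 0 := fun h => by
    have : (3 : S) * (3 - 1) + 1 = 0 := by
      simpa [Matrix.det_fin_two, Matrix.ofNat_apply] using hdet' h
    linear_combination this
  have r_le_six : r ≤ 6 := by lia
  -- For `2 ≤ r ≤ 4` the equation `1 = r` suffices; at the ends `1 = 0`, or `7 = 0` and `1 = 5`.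
  interval_cases r
  · linear_combination 6 * of_r_eq_zero rfl
  · linear_combination 6 * of_r_eq_one rfl
  · push_cast at trace_eq; linear_combination -6 * trace_eq
  · push_cast at trace_eq; linear_combination -3 * trace_eq
  · push_cast at trace_eq; linear_combination -2 * trace_eq
  · push_cast at trace_eq; linear_combination 2 * of_s_eq_one (by lia) + 2 * trace_eq
  · linear_combination 6 * of_s_eq_zero (by lia)

theorem natCast_cube_eq_self (h6 : (6 : S) = 0) (n : ℕ) : (n : S) ^ 3 = n := by
  induction n with
  | zero => simp
  | succ n ih =>
    obtain ⟨k, hk⟩ := Nat.even_mul_succ_self n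
    have hk' : (n : S) * (n + 1) = k + k := mod_cast congrArg (Nat.cast : ℕ → S) hk
    push_cast
    linear_combination ih + 3 * hk' + k * h6

theorem cube_eq_self_of_connected (hS : ∀ e : S, IsIdempotentElem e → e = 0 ∨ e = 1)
    (hC : IsSumOfThreeIdempotents (!![0, -1; 1, 1] : Matrix (Fin 2) (Fin 2) S)) {x : S}
    (hx : IsSumOfThreeIdempotents !![x, 0; 0, 0]) : x ^ 3 = x := by
  have h6 := six_eq_zero_of_isSumOfThreeIdempotents hS hC
  obtain ⟨n, -, -, ⟨hn, -⟩, -⟩ := hx.exists_hasFormalRank hS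
  obtain rfl : x = n := by simpa [Matrix.trace_fin_two] using hn
  exact natCast_cube_eq_self h6 n

theorem mapMatrix_fin_two {R S : Type*} [NonAssocSemiring R] [NonAssocSemiring S]
    (φ : R →+* S) (a b c d : R) :
    φ.mapMatrix !![a, b; c, d] = !![φ a, φ b; φ c, φ d] := by
  ext i j
  fin_cases i <;> fin_cases j <;> rfl

theorem eq_zero_or_eq_one_of_isLocalRing [IsLocalRing S] {e : S} (he : IsIdempotentElem e) :
    e = 0 ∨ e = 1 := by
  rcases IsLocalRing.isUnit_or_isUnit_one_sub_self e with h | h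
  · exact .inr ((IsIdempotentElem.iff_eq_one_of_isUnit h).1 he)
  · exact .inl (sub_eq_self.1 ((IsIdempotentElem.iff_eq_one_of_isUnit h).1 he.one_sub))

theorem cube_eq_self_of_isSumOfThreeIdempotents
    (hC : IsSumOfThreeIdempotents (!![0, -1; 1, 1] : Matrix (Fin 2) (Fin 2) S))
    {x : S} (hx : IsSumOfThreeIdempotents !![x, 0; 0, 0]) : x ^ 3 = x := by
  rw [← sub_eq_zero]
  refine eq_zero_of_localization _ fun J hJ => ?_
  let φ := algebraMap S (Localization.AtPrime J)
  rw [map_sub, map_pow, sub_eq_zero]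
  refine cube_eq_self_of_connected (fun e => eq_zero_or_eq_one_of_isLocalRing) ?_ ?_
  · simpa only [mapMatrix_fin_two, map_neg, map_zero, map_one] using hC.map φ.mapMatrix
  · simpa only [mapMatrix_fin_two, map_zero] using hx.map φ.mapMatrix

end FinTwo

section Bidiagonal

variable {R V : Type*} [CommRing R] [AddCommGroup V] [Module R V] {m : ℕ}
  (B : Module.Basis (Fin (m + 1)) R V)

/-- The endomorphism whose matrix in the basis `B` is lower bidiagonal, with diagonal entries
`α 0, …, α m` and subdiagonal entries `ε 0, …, ε (m - 1)`. -/
noncomputable def bidiagonal (α ε : ℕ → R) : Module.End R V :=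
  B.constr R <| Fin.lastCases (α m • B (Fin.last m))
    fun i => α i • B i.castSucc + ε i • B i.succ

@[simp]
theorem bidiagonal_castSucc (α ε : ℕ → R) (i : Fin m) :
    bidiagonal B α ε (B i.castSucc) = α i • B i.castSucc + ε i • B i.succ := by
  simp [bidiagonal]

@[simp]
theorem bidiagonal_last (α ε : ℕ → R) :
    bidiagonal B α ε (B (Fin.last m)) = α m • B (Fin.last m) := by
  simp [bidiagonal]

theorem trace_bidiagonal (α ε : ℕ → R) :
    LinearMap.trace R V (bidiagonal B α ε) = ∑ i ∈ Finset.range (m + 1), α i := by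
  rw [LinearMap.trace_eq_matrix_trace R B, Matrix.trace, Fin.sum_univ_castSucc,
    Finset.sum_range_succ, Finset.sum_range]
  simp [LinearMap.toMatrix_apply, Fin.ext_iff]

theorem isIdempotentElem_bidiagonal {α ε : ℕ → R} (hα : ∀ i, IsIdempotentElem (α i))
    (hαε : ∀ i < m, ε i * (α i + α (i + 1)) = ε i) (hε : ∀ i, ε i * ε (i + 1) = 0) :
    IsIdempotentElem (bidiagonal B α ε) := by
  have smul_succ (i : Fin m) :
      ε i • bidiagonal B α ε (B i.succ) = (ε i * α (i + 1)) • B i.succ := by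
    rcases Fin.eq_castSucc_or_eq_last i.succ with ⟨j, hj⟩ | hlast
    · have hij : (j : ℕ) = i + 1 := by simpa using congrArg Fin.val hj.symm
      rw [hj, bidiagonal_castSucc, hij, smul_add, smul_smul, smul_smul, hε, zero_smul, add_zero]
    · have him : m = i + 1 := by simpa using congrArg Fin.val hlast.symm
      rw [hlast, bidiagonal_last, smul_smul, ← him]
  refine B.ext fun i => ?_
  induction i using Fin.lastCases with
  | last => simp [smul_smul, (hα m).eq]
  | cast i =>
    calc bidiagonal B α ε (bidiagonal B α ε (B i.castSucc))
        = (α i * α i) • B i.castSucc + (ε i * (α i + α (i + 1))) • B i.succ := by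
          rw [bidiagonal_castSucc, map_add, map_smul, map_smul, smul_succ, bidiagonal_castSucc]
          module
      _ = bidiagonal B α ε (B i.castSucc) := by
          rw [(hα i).eq, hαε i i.isLt, bidiagonal_castSucc]

theorem isIdempotentElem_of_apply_castSucc_eq_zero {g : Module.End R V}
    (hg : ∀ i : Fin m, g (B i.castSucc) = 0) (htr : LinearMap.trace R V g = 1) :
    IsIdempotentElem g := by
  have coord_last : B.coord (Fin.last m) (g (B (Fin.last m))) = 1 := by
    rw [← htr, LinearMap.trace_eq_matrix_trace R B, Matrix.trace, Fin.sum_univ_castSucc]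
    simp [LinearMap.toMatrix_apply, hg]
  have rank_one : g = (B.coord (Fin.last m)).smulRight (g (B (Fin.last m))) := by
    refine B.ext fun i => ?_
    induction i using Fin.lastCases with
    | last => simp
    | cast i => simp [hg, Fin.ext_iff, i.isLt.ne]
  refine LinearMap.ext fun x => ?_
  rw [rank_one, Module.End.mul_apply]
  simp only [LinearMap.smulRight_apply, map_smul, coord_last, one_smul]

/-- The diagonal of `zigzag`. Each edge `(i, i + 1)` of the path `0 — ⋯ — m` with `P i` has its `1`
at the vertex `i`. If `P` alternates, only the ends of the path can lie on no such edge, and there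
the diagonal entries are `t` (at `0`) and `s` (at `m`). -/
def zigzagDiag (m : ℕ) (P : ℕ → Prop) [DecidablePred P] (s t : R) (i : ℕ) : R :=
  if P i then if i = m then s else 1 else if i = 0 then t else 0

/-- The sum of the blocks `!![1, 0; 1, 0]` on the edges `(i, i + 1)` with `P i` of the path
`0 — ⋯ — m` formed by the basis `B`, and of the scalars `t` and `s` at the ends of the path. It is
used for `P = Even` and `P = Odd`, for which these blocks are disjoint. -/
noncomputable def zigzag (P : ℕ → Prop) [DecidablePred P] (s t : R) : Module.End R V :=
  bidiagonal B (zigzagDiag m P s t) fun i => if P i then 1 else 0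

theorem isIdempotentElem_zigzag {P : ℕ → Prop} [DecidablePred P] (hP : ∀ i, P (i + 1) ↔ ¬P i)
    {s t : R} (hs : IsIdempotentElem s) (ht : IsIdempotentElem t) :
    IsIdempotentElem (zigzag B P s t) := by
  refine isIdempotentElem_bidiagonal B (fun i => ?_) (fun i hi => ?_) fun i => ?_
  · unfold zigzagDiag
    split_ifs
    exacts [hs, .one, ht, .zero]
  · by_cases h : P i <;> simp [zigzagDiag, hP, h, hi.ne]
  · by_cases h : P i <;> simp [hP, h]

theorem zigzagDiag_even_add_odd (s t : R) (i : ℕ) :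
    zigzagDiag m Even s t i + zigzagDiag m Odd s t i =
      (if i = m then s else 1) + if i = 0 then t else 0 := by
  by_cases h : Even i
  · simp [zigzagDiag, h, ← Nat.not_even_iff_odd]
  · have h0 : i ≠ 0 := by rintro rfl; exact h Even.zero
    simp [zigzagDiag, h, h0, Nat.not_even_iff_odd.1 h]

theorem trace_zigzag_even_add_trace_zigzag_odd (s t : R) :
    LinearMap.trace R V (zigzag B Even s t) + LinearMap.trace R V (zigzag B Odd s t) =
      m + s + t := by
  have sum_lt : ∑ i ∈ Finset.range m, (if i = m then s else 1) = m := by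
    rw [Finset.sum_congr rfl fun i hi => if_neg (Finset.mem_range.1 hi).ne]
    simp
  rw [zigzag, zigzag, trace_bidiagonal, trace_bidiagonal, ← Finset.sum_add_distrib,
    Finset.sum_congr rfl fun i _ => zigzagDiag_even_add_odd s t i, Finset.sum_add_distrib,
    Finset.sum_range_succ, sum_lt]
  simp

end Bidiagonal

section Newton

variable {R V : Type*} [CommRing R] [AddCommGroup V] [Module R V]

/-- The Newton-type sequence `(f - c (i - 1)) ⋯ (f - c 0) v`, which replaces the iterates `f ^ i v`
when the matrix of a cyclic endomorphism is to have a prescribed diagonal `c`. -/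
def newtonVector (f : Module.End R V) (c : ℕ → R) (v : V) : ℕ → V
  | 0 => v
  | i + 1 => f (newtonVector f c v i) - c i • newtonVector f c v i

theorem apply_newtonVector (f : Module.End R V) (c : ℕ → R) (v : V) (i : ℕ) :
    f (newtonVector f c v i) = c i • newtonVector f c v i + newtonVector f c v (i + 1) := by
  rw [newtonVector, add_sub_cancel]

theorem pow_apply_mem_span_newtonVector (f : Module.End R V) (c : ℕ → R) (v : V) (k : ℕ) :
    (f ^ k) v ∈ Submodule.span R (newtonVector f c v '' Set.Iic k) := by
  have mem_span {i k : ℕ} (hik : i ≤ k) :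
      newtonVector f c v i ∈ Submodule.span R (newtonVector f c v '' Set.Iic k) :=
    Submodule.subset_span ⟨i, hik, rfl⟩
  induction k with
  | zero => exact mem_span le_rfl
  | succ k ih =>
    have map_le : (Submodule.span R (newtonVector f c v '' Set.Iic k)).map f ≤
        Submodule.span R (newtonVector f c v '' Set.Iic (k + 1)) := by
      rw [Submodule.map_span_le]
      rintro _ ⟨i, hi : i ≤ k, rfl⟩
      rw [apply_newtonVector]
      exact add_mem (Submodule.smul_mem _ _ (mem_span (by lia))) (mem_span (by lia))
    rw [pow_succ', Module.End.mul_apply]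
    exact map_le (Submodule.mem_map_of_mem ih)

theorem exists_basis_eq_newtonVector {n : ℕ} {f : Module.End R V} {v : V}
    (B : Module.Basis (Fin n) R V) (hB : ∀ i, B i = (f ^ (i : ℕ)) v) (c : ℕ → R) :
    ∃ B' : Module.Basis (Fin n) R V, ∀ i, B' i = newtonVector f c v i := by
  cases subsingleton_or_nontrivial R
  · have := Module.subsingleton R V
    exact ⟨B, fun i => Subsingleton.elim _ _⟩
  have := Module.Free.of_basis B
  have := Module.Finite.of_basis B
  have spans : ⊤ ≤ Submodule.span R (Set.range fun i : Fin n => newtonVector f c v i) := by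
    rw [← B.span_eq, Submodule.span_le]
    rintro _ ⟨i, rfl⟩
    rw [hB]
    refine Submodule.span_mono ?_ (pow_apply_mem_span_newtonVector f c v i)
    rintro _ ⟨j, hj : j ≤ i, rfl⟩
    exact ⟨⟨j, by lia⟩, rfl⟩
  have card_eq : Fintype.card (Fin n) = Module.finrank R V :=
    (Module.finrank_eq_card_basis B).symm
  exact ⟨basisOfTopLeSpanOfCardEqFinrank _ spans card_eq, by simp⟩

theorem isSumOfThreeIdempotents_of_basis_eq_newtonVector {m : ℕ}
    {f : Module.End R V} {v : V} {s t : R} (hs : IsIdempotentElem s)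
    (ht : IsIdempotentElem t) (htr : LinearMap.trace R V f = (m + 1 : ℕ) + s + t)
    (B : Module.Basis (Fin (m + 1)) R V)
    (hB : ∀ i, B i =
      newtonVector f (fun i => zigzagDiag m Even s t i + zigzagDiag m Odd s t i) v i) :
    IsSumOfThreeIdempotents f := by
  let e : Module.End R V := zigzag B Even s t
  let e' : Module.End R V := zigzag B Odd s t
  have residual_castSucc (i : Fin m) : (f - e - e') (B i.castSucc) = 0 := by
    have parity : (if Even (i : ℕ) then 1 else 0) + (if Odd (i : ℕ) then 1 else 0) = (1 : R) := by
      by_cases h : Even (i : ℕ) <;> simp [h, ← Nat.not_even_iff_odd]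
    have apply_B : f (B i.castSucc) =
        (zigzagDiag m Even s t i + zigzagDiag m Odd s t i) • B i.castSucc + B i.succ := by
      rw [hB, hB, apply_newtonVector]
      rfl
    simp only [e, e', zigzag, LinearMap.sub_apply, bidiagonal_castSucc, apply_B]
    linear_combination (norm := module) -parity • B i.succ
  have trace_residual : LinearMap.trace R V (f - e - e') = 1 := by
    rw [map_sub, map_sub, htr]
    push_cast
    linear_combination -trace_zigzag_even_add_trace_zigzag_odd B s t
  exact ⟨e, e', f - e - e', isIdempotentElem_zigzag B (fun _ => Nat.even_add_one) hs ht,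
    isIdempotentElem_zigzag B (fun i => Nat.odd_add_one) hs ht,
    isIdempotentElem_of_apply_castSucc_eq_zero B residual_castSucc trace_residual, by abel⟩

theorem isSumOfThreeIdempotents_of_basis_eq_pow_apply {n : ℕ}
    {f : Module.End R V} {v : V} {s t : R}
    (B : Module.Basis (Fin n) R V) (hB : ∀ i, B i = (f ^ (i : ℕ)) v)
    (hs : IsIdempotentElem s) (ht : IsIdempotentElem t)
    (htr : LinearMap.trace R V f = n + s + t) : IsSumOfThreeIdempotents f := by
  cases n with
  | zero =>
    have : Subsingleton V := B.repr.toEquiv.subsingleton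
    exact ⟨0, 0, 0, .zero, .zero, .zero, Subsingleton.elim _ _⟩
  | succ m =>
    obtain ⟨B', hB'⟩ := exists_basis_eq_newtonVector B hB
      fun i => zigzagDiag m Even s t i + zigzagDiag m Odd s t i
    exact isSumOfThreeIdempotents_of_basis_eq_newtonVector hs ht htr B' hB'

end Newton

section CubeIdentity

variable {R : Type*} [CommRing R]

theorem isIdempotentElem_sq_of_cube_eq_self {M : Type*} [Monoid M] {a : M} (ha : a ^ 3 = a) :
    IsIdempotentElem (a ^ 2) := by
  rw [IsIdempotentElem, ← pow_add, pow_succ a 3, ha, sq]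

theorem isIdempotentElem_sub_sq_of_forall_cube_eq_self (hR : ∀ a : R, a ^ 3 = a)
    (a : R) : IsIdempotentElem (a - a ^ 2) := by
  have three_mul_sq : 3 * a ^ 2 = 3 * a := by
    linear_combination hR (a + 1) - hR a - a * hR 2
  rw [IsIdempotentElem]
  linear_combination (a - 2) * hR a + three_mul_sq

theorem isReduced_of_forall_cube_eq_self {R : Type*} [MonoidWithZero R]
    (hR : ∀ a : R, a ^ 3 = a) : IsReduced R :=
  (isReduced_iff_pow_one_lt 2 one_lt_two).2 fun x hx => by rw [← hR x, pow_succ, hx, zero_mul]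

theorem krullDimLE_zero_of_forall_cube_eq_self (hR : ∀ a : R, a ^ 3 = a) :
    Ring.KrullDimLE 0 R := Ring.KrullDimLE.mk₀ fun I hI => by
  rw [Ideal.Quotient.maximal_ideal_iff_isField_quotient]
  refine ⟨⟨0, 1, zero_ne_one⟩, mul_comm, fun {a} ha => ⟨a, mul_left_cancel₀ ha ?_⟩⟩
  obtain ⟨r, rfl⟩ := Ideal.Quotient.mk_surjective a
  rw [← map_mul, ← map_mul, mul_one, ← pow_three, hR]

theorem isSumOfThreeIdempotents_mulLeft_powerBasis_gen {S : Type*} [Ring S] [Algebra R S]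
    (hR : ∀ a : R, a ^ 3 = a) (pb : PowerBasis R S) :
    IsSumOfThreeIdempotents (LinearMap.mulLeft R pb.gen) := by
  let c := LinearMap.trace R S (LinearMap.mulLeft R pb.gen) - pb.dim
  refine isSumOfThreeIdempotents_of_basis_eq_pow_apply (v := 1) pb.basis (fun i => ?_)
    (isIdempotentElem_sq_of_cube_eq_self (hR c))
    (isIdempotentElem_sub_sq_of_forall_cube_eq_self hR c) (by ring)
  simp [LinearMap.pow_mulLeft]

end CubeIdentity

section Field

variable {K : Type*} [Field K]

theorem isSumOfThreeIdempotents_lsmul_X_quotient (hK : ∀ a : K, a ^ 3 = a) {q : K[X]}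
    (hq : q ≠ 0) :
    IsSumOfThreeIdempotents
      (Algebra.lsmul K K (K[X] ⧸ Submodule.span K[X] {q}) (X : K[X]) :
        Module.End K (K[X] ⧸ Submodule.span K[X] {q})) := by
  have h := isSumOfThreeIdempotents_mulLeft_powerBasis_gen hK (AdjoinRoot.powerBasis hq)
  have mulLeft_root : LinearMap.mulLeft K (AdjoinRoot.root q) =
      Algebra.lsmul K K (K[X] ⧸ Submodule.span K[X] {q}) (X : K[X]) := LinearMap.ext fun x => by
    obtain ⟨x, rfl⟩ := AdjoinRoot.mk_surjective x
    rfl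
  rwa [AdjoinRoot.powerBasis_gen, mulLeft_root] at h

theorem isSumOfThreeIdempotents_end {V : Type*} [AddCommGroup V] [Module K V] [Module.Finite K V]
    (hK : ∀ a : K, a ^ 3 = a) (f : Module.End K V) : IsSumOfThreeIdempotents f := by
  classical
  obtain ⟨ι, _, p, hp, e, ⟨g⟩⟩ := Module.equiv_directSum_of_isTorsion
    (R := K[X]) (M := Module.AEval' f) (Module.AEval.isTorsion_of_finiteDimensional K V f)
  let M (i : ι) := K[X] ⧸ Submodule.span K[X] {p i ^ e i}
  let L : V ≃ₗ[K] DirectSum ι M := (Module.AEval'.of f).trans (g.restrictScalars K)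
  let mulX (i : ι) : Module.End K (M i) := Algebra.lsmul K K (M i) (X : K[X])
  have apply_L (v : V) : L (f v) = DirectSum.lmap mulX (L v) := by
    calc g (Module.AEval'.of f (f v))
        = g ((X : K[X]) • Module.AEval'.of f v) := by rw [Module.AEval'.X_smul_of]
      _ = (X : K[X]) • L v := map_smul g _ _
      _ = DirectSum.lmap mulX (L v) := rfl
  have conj_mulX : L.symm.conjRingEquiv (DirectSum.lmap mulX) = f :=
    LinearMap.ext fun v => L.symm_apply_eq.2 (apply_L v).symm
  have mulX_sum (i : ι) : IsSumOfThreeIdempotents (mulX i) :=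
    isSumOfThreeIdempotents_lsmul_X_quotient hK (pow_ne_zero _ (hp i).ne_zero)
  exact conj_mulX ▸ (IsSumOfThreeIdempotents.directSum_lmap mulX_sum).map L.symm.conjRingEquiv

end Field

section Matrix

variable {n : Type*} [Fintype n]

theorem isSumOfThreeIdempotents_matrix_pi {ι : Type*} {S : ι → Type*}
    [∀ i, NonUnitalNonAssocSemiring (S i)] {A : Matrix n n (∀ i, S i)}
    (h : ∀ i, IsSumOfThreeIdempotents (A.map fun a => a i)) : IsSumOfThreeIdempotents A :=
  (IsSumOfThreeIdempotents.pi h).map (Matrix.piRingEquiv (β := S) (n := n)).symm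

theorem isSumOfThreeIdempotents_matrix_of_field {K : Type*} [Field K] (hK : ∀ a : K, a ^ 3 = a)
    (A : Matrix n n K) : IsSumOfThreeIdempotents A := by
  classical
  have h := (isSumOfThreeIdempotents_end hK (Matrix.toLinAlgEquiv' A)).map
    (Matrix.toLinAlgEquiv' (R := K) (n := n)).symm
  rwa [AlgEquiv.symm_apply_apply] at h

theorem isSumOfThreeIdempotents_matrix_of_isNoetherianRing {S : Type*} [CommRing S]
    [IsNoetherianRing S] (hS : ∀ a : S, a ^ 3 = a) (A : Matrix n n S) :
    IsSumOfThreeIdempotents A := by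
  classical
  have := isReduced_of_forall_cube_eq_self hS
  have := krullDimLE_zero_of_forall_cube_eq_self hS
  have : IsArtinianRing S := IsNoetherianRing.isArtinianRing_of_krullDimLE_zero
  let φ := (IsArtinianRing.equivPi S).toRingEquiv
  have residue_cube (I : MaximalSpectrum S) (a : S ⧸ I.asIdeal) : a ^ 3 = a := by
    obtain ⟨r, rfl⟩ := Ideal.Quotient.mk_surjective a
    rw [← map_pow, hS]
  have residue (I : MaximalSpectrum S) (B : Matrix n n (S ⧸ I.asIdeal)) :
      IsSumOfThreeIdempotents B :=
    let _ := Ideal.Quotient.field I.asIdeal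
    isSumOfThreeIdempotents_matrix_of_field (residue_cube I) B
  have h := (isSumOfThreeIdempotents_matrix_pi fun I =>
    residue I ((φ.mapMatrix A).map fun a => a I)).map φ.mapMatrix.symm
  rwa [RingEquiv.symm_apply_apply] at h

theorem isSumOfThreeIdempotents_matrix {R : Type*} [CommRing R] (hR : ∀ a : R, a ^ 3 = a)
    (A : Matrix n n R) : IsSumOfThreeIdempotents A := by
  classical
  let s : Set R := Set.range fun ij : n × n => A ij.1 ij.2
  have := is_noetherian_subring_closure s (Set.finite_range _)
  let A' : Matrix n n (Subring.closure s) :=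
    .of fun i j => ⟨A i j, Subring.subset_closure ⟨(i, j), rfl⟩⟩
  exact (isSumOfThreeIdempotents_matrix_of_isNoetherianRing
    (fun a => Subtype.ext (hR a)) A').map (Subring.closure s).subtype.mapMatrix

end Matrix

/-- For a commutative ring `R`, the following are equivalent:
(1) every matrix in `M_2(R)` is a sum of three idempotents;
(2) for every `n ≥ 1`, every matrix in `M_n(R)` is a sum of three idempotents;
(3) `R` satisfies the identity `x^3 = x`. -/
theorem matrix_sum_three_idempotents_comm_ring_tfae (R : Type*) [CommRing R] :
    List.TFAE [
      ∀ A : Matrix (Fin 2) (Fin 2) R,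
        ∃ E₁ E₂ E₃ : Matrix (Fin 2) (Fin 2) R,
          E₁ * E₁ = E₁ ∧ E₂ * E₂ = E₂ ∧ E₃ * E₃ = E₃ ∧ A = E₁ + E₂ + E₃,
      ∀ n : ℕ, 1 ≤ n → ∀ A : Matrix (Fin n) (Fin n) R,
        ∃ E₁ E₂ E₃ : Matrix (Fin n) (Fin n) R,
          E₁ * E₁ = E₁ ∧ E₂ * E₂ = E₂ ∧ E₃ * E₃ = E₃ ∧ A = E₁ + E₂ + E₃,
      ∀ a : R, a ^ 3 = a] := by
  tfae_have 2 → 1 := fun h => h 2 one_le_two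
  tfae_have 1 → 3 := fun h x => cube_eq_self_of_isSumOfThreeIdempotents (h _) (h _)
  tfae_have 3 → 2 := fun h n _ A => isSumOfThreeIdempotents_matrix h A
  tfae_finish
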